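/- arXiv:2603.18162 — 3 statements merged into one kernel-verified Lean document; each statement's English description precedes it below -/
import Mathlib

section
/- Let d ≥ 1 and D ≥ 3 be integers and let A ⊆ ℕ^d be of smooth type for D. Then the set {s ∈ ℕ : sA = Δ_s and Δ_s + {0, Dε₁, …, Dε_d} = Δ_{s+1}} is nonempty, and its least element σ(A) satisfies d·(D−1) ≤ D·σ(A) (equivalently d − d/D ≤ σ(A)) and σ(A) ≤ d(D−2). -/
open Pointwise

/-- The `s`-fold sumset of `A`: `0A = {0}` and `(s+1)A = A + sA`. -/
def sumset {M : Type*} [AddMonoid M] (A : Set M) : ℕ → Set M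
  | 0 => {0}
  | s + 1 => A + sumset A s

/-- `A ⊆ ℕ^d` is of smooth type for `D`. -/
def SmoothType (d D : ℕ) (A : Set (Fin d → ℕ)) : Prop :=
  (∀ a ∈ A, ∑ j, a j ≤ D) ∧
  (0 : Fin d → ℕ) ∈ A ∧
  (∀ i : Fin d, Pi.single i 1 ∈ A) ∧
  (∀ i : Fin d, Pi.single i (D - 1) ∈ A) ∧
  (∀ i j : Fin d, Pi.single i 1 + Pi.single j (D - 1) ∈ A)

/-- The discrete simplex `Δ_s = {y ∈ ℕ^d : |y| ≤ sD}`. -/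
def Delta (d D s : ℕ) : Set (Fin d → ℕ) := {y | ∑ j, y j ≤ s * D}

/-- The set `{0, Dε₁, …, Dε_d}`. -/
def Erays (d D : ℕ) : Set (Fin d → ℕ) :=
  insert 0 (Set.range fun i : Fin d => Pi.single i D)

theorem aux_sub {d : ℕ} (q : Fin d → ℕ) (k : ℕ) (hk : k ≤ ∑ j, q j) :
    ∃ u : Fin d → ℕ, u ≤ q ∧ ∑ j, u j = k := by
  induction k with
  | zero => exact ⟨0, fun i => Nat.zero_le _, by simp⟩
  | succ k ih =>
    obtain ⟨u, hu, hs⟩ := ih (by omega)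
    have : ∃ i ∈ Finset.univ, u i < q i := Finset.exists_lt_of_sum_lt (by omega)
    obtain ⟨i, -, hi⟩ := this
    refine ⟨u + Pi.single i 1, ?_, ?_⟩
    · intro j
      by_cases h : j = i
      · subst h; simp; omega
      · simpa [h] using hu j
    · simp [Finset.sum_add_distrib, hs]

theorem aux_split {d : ℕ} (u : Fin d → ℕ) (s : ℕ) (hu : ∑ j, u j ≤ s + 1) :
    ∃ e u' : Fin d → ℕ, u = e + u' ∧ ∑ j, u' j ≤ s ∧ (e = 0 ∨ ∃ i, e = Pi.single i 1) := by
  by_cases h : ∑ j, u j ≤ s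
  · exact ⟨0, u, by simp, h, Or.inl rfl⟩
  · obtain ⟨i, -, hi⟩ : ∃ i ∈ Finset.univ, u i ≠ 0 :=
      Finset.exists_ne_zero_of_sum_ne_zero (f := u) (by omega)
    have hd : u = Pi.single i 1 + (u - Pi.single i 1) := by
      ext j
      by_cases h : j = i
      · subst h; simp; omega
      · simp [h]
    refine ⟨Pi.single i 1, u - Pi.single i 1, hd, ?_, Or.inr ⟨i, rfl⟩⟩
    have h2 : ∑ j, u j = 1 + ∑ j, (u - Pi.single i 1 : Fin d → ℕ) j := by
      conv_lhs => rw [hd]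
      simp only [Pi.add_apply, Finset.sum_add_distrib]
      simp
    omega

theorem aux_mem {d D : ℕ} {A : Set (Fin d → ℕ)} (hA : SmoothType d D A) (s : ℕ) :
    ∀ u v : Fin d → ℕ, ∑ j, u j ≤ s → ∑ j, v j ≤ s → (D - 1) • u + v ∈ sumset A s := by
  obtain ⟨-, h0, h1, h2, h3⟩ := hA
  induction s with
  | zero =>
    intro u v hu hv
    have hu' : u = 0 := by ext i; simp at hu; simp [hu]
    have hv' : v = 0 := by ext i; simp at hv; simp [hv]
    simp [hu', hv', sumset]
  | succ s ih =>
    intro u v hu hv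
    obtain ⟨e, u', rfl, hu', he⟩ := aux_split u s hu
    obtain ⟨f, v', rfl, hv', hf⟩ := aux_split v s hv
    refine Set.mem_add.2 ⟨(D - 1) • e + f, ?_, _, ih u' v' hu' hv', ?_⟩
    · have key : ∀ i : Fin d, (D - 1) • (Pi.single i 1 : Fin d → ℕ) = Pi.single i (D - 1) := by
        intro i; rw [← Pi.single_smul]; simp
      rcases he with rfl | ⟨i, rfl⟩ <;> rcases hf with rfl | ⟨j, rfl⟩
      · simpa using h0
      · simpa using h1 j
      · rw [key]; simpa using h2 i
      · rw [key, add_comm]; exact h3 j i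
    · rw [smul_add]; abel

theorem aux_le {d D : ℕ} {A : Set (Fin d → ℕ)} (hA : ∀ a ∈ A, ∑ j, a j ≤ D) (s : ℕ) :
    sumset A s ⊆ Delta d D s := by
  induction s with
  | zero => intro y hy; simp [sumset] at hy; simp [hy, Delta]
  | succ s ih =>
    rintro _ ⟨a, ha, b, hb, rfl⟩
    have := hA a ha
    have h2 := ih hb
    simp only [Delta, Set.mem_setOf_eq, Pi.add_apply, Finset.sum_add_distrib] at h2 ⊢
    linarith

theorem stmt_5 (d D : ℕ) (hd : 1 ≤ d) (hD : 3 ≤ D)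
    (A : Set (Fin d → ℕ)) (hA : SmoothType d D A) :
    ∃ σ : ℕ,
      IsLeast {s : ℕ | sumset A s = Delta d D s ∧
        Delta d D s + Erays d D = Delta d D (s + 1)} σ ∧
      d * (D - 1) ≤ D * σ ∧ σ ≤ d * (D - 2) := by
  have lower : ∀ s, Delta d D s + Erays d D = Delta d D (s + 1) → d * (D - 1) ≤ D * s := by
    intro s hs
    by_contra hlt
    obtain ⟨y, hy, hsum⟩ := aux_sub (fun _ : Fin d => D - 1) (D * s + 1) (by simp; omega)
    have : y ∈ Delta d D (s + 1) := by
      simp only [Delta, Set.mem_setOf_eq, hsum]; nlinarith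
    rw [← hs] at this
    obtain ⟨a, ha, b, hb, rfl⟩ := this
    rcases hb with rfl | ⟨i, rfl⟩
    · simp only [Delta, Set.mem_setOf_eq] at ha
      simp at hsum
      nlinarith
    · have := hy i
      simp at this
      omega
  have upper : (d * (D - 2)) ∈ {s : ℕ | sumset A s = Delta d D s ∧
        Delta d D s + Erays d D = Delta d D (s + 1)} := by
    have hbig : d * (D - 1) ≤ d * (D - 2) * D := by
      rw [mul_assoc]
      apply Nat.mul_le_mul_left
      obtain ⟨k, rfl⟩ := Nat.exists_eq_add_of_le hD
      have h1 : 3 + k - 1 = k + 2 := by omega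
      have h2 : 3 + k - 2 = k + 1 := by omega
      rw [h1, h2]; nlinarith
    refine ⟨(aux_le hA.1 _).antisymm ?_, ?_⟩
    · intro y hy
      simp only [Delta, Set.mem_setOf_eq] at hy
      have hmod : y = (D - 1) • (fun j => y j / (D - 1)) + (fun j => y j % (D - 1)) := by
        ext j; simp [Nat.div_add_mod]
      have hr : ∑ j, y j % (D - 1) ≤ d * (D - 2) := by
        calc ∑ j, y j % (D - 1) ≤ ∑ j : Fin d, (D - 2) := by
              apply Finset.sum_le_sum
              intro j _
              have := Nat.mod_lt (y j) (show D - 1 > 0 by omega)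
              omega
          _ = _ := by simp
      generalize d * (D - 2) = s at *
      by_cases h : ∑ j, y j / (D - 1) ≤ s
      · rw [hmod]
        exact aux_mem hA s _ _ h hr
      · obtain ⟨u, hu, hus⟩ := aux_sub (fun j => y j / (D - 1)) s (by omega)
        have hle : ∀ j, (D - 1) * u j ≤ y j := fun j =>
          (Nat.mul_le_mul_left _ (hu j)).trans (Nat.mul_div_le _ _)
        have hy2 : y = (D - 1) • u + (y - (D - 1) • u) := by
          ext j
          have := hle j
          simp; omega
        have hsum : ∑ j, y j = (D - 1) * s + ∑ j, (y - (D - 1) • u) j := by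
          conv_lhs => rw [hy2]
          simp only [Pi.add_apply, Finset.sum_add_distrib, Pi.smul_apply, smul_eq_mul]
          rw [← Finset.mul_sum, hus]
        rw [hy2]
        apply aux_mem hA s _ _ hus.le
        obtain ⟨k, rfl⟩ := Nat.exists_eq_add_of_le hD
        have h1 : 3 + k - 1 = k + 2 := by omega
        rw [h1] at hsum ⊢
        nlinarith
    · generalize d * (D - 2) = s at *
      ext y
      constructor
      · rintro ⟨a, ha, b, hb, rfl⟩
        have hb' : ∑ j, b j ≤ D := by
          rcases hb with rfl | ⟨i, rfl⟩ <;> simp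
        simp only [Delta, Set.mem_setOf_eq, Pi.add_apply, Finset.sum_add_distrib] at ha ⊢
        linarith
      · intro hy
        by_cases h : ∑ j, y j ≤ s * D
        · exact ⟨y, h, 0, Or.inl rfl, by simp⟩
        · have : ∃ i, D ≤ y i := by
            by_contra hc
            push Not at hc
            apply h
            calc ∑ j, y j ≤ ∑ j : Fin d, (D - 1) :=
                  Finset.sum_le_sum fun j _ => by have := hc j; omega
              _ = d * (D - 1) := by simp
              _ ≤ _ := hbig
          obtain ⟨i, hi⟩ := this
          have hy2 : y = (y - Pi.single i D) + Pi.single i D := by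
            ext j
            by_cases h : j = i
            · subst h; simp; omega
            · simp [h]
          refine ⟨y - Pi.single i D, ?_, Pi.single i D, Or.inr ⟨i, rfl⟩, hy2.symm⟩
          have hsum : ∑ j, y j = ∑ j, (y - Pi.single i D : Fin d → ℕ) j + D := by
            conv_lhs => rw [hy2]
            simp only [Pi.add_apply, Finset.sum_add_distrib]
            simp
          simp only [Delta, Set.mem_setOf_eq] at hy ⊢
          nlinarith
  refine ⟨sInf _, ⟨Nat.sInf_mem ⟨_, upper⟩, fun s hs => Nat.sInf_le hs⟩, ?_, Nat.sInf_le upper⟩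
  exact lower _ (Nat.sInf_mem ⟨_, upper⟩).2
end

section
/- Let d ≥ 1, D ≥ 3 and e be integers with 1 ≤ e ≤ D and e ∣ D, assume (D−2)(d−1) + D/e ≥ 2, and let A ⊆ ℕ^d be of one-singular-point type for D and e. Set t₀ := (D−2)(d−1) + D/e − 2. If y ∈ ℕ^d satisfies e ∣ |y| and |y| > t₀·D, then y ∈ sA for every natural number s with s·D ≥ |y|. -/
open Pointwise

/-- `ℕ_e^d = {y ∈ ℕ^d : e ∣ |y|}`. -/
def NatE (d e : ℕ) : Set (Fin d → ℕ) := {y | e ∣ ∑ j, y j}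

/-- `Δ_{s,e} = {y ∈ ℕ_e^d : |y| ≤ sD}`. -/
def DeltaE (d D e s : ℕ) : Set (Fin d → ℕ) := {y | e ∣ ∑ j, y j ∧ ∑ j, y j ≤ s * D}

/-- The hole set `H = ℕ_e^d \ ⟨A⟩`, where `⟨A⟩` is the additive submonoid generated by `A`. -/
def Holes (d e : ℕ) (A : Set (Fin d → ℕ)) : Set (Fin d → ℕ) :=
  NatE d e \ (AddSubmonoid.closure A : Set (Fin d → ℕ))

/-- `A ⊆ ℕ^d` is of one-singular-point type for `D` and `e`: every `a ∈ A` satisfies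
`|a| ≤ D` and `e ∣ |a|`, and `A` contains `0`, the vectors `(D-1)εᵢ + εⱼ` for all `i, j`,
and the vectors `(D-e)εᵢ` for all `i`. -/
def OneSingType (d D e : ℕ) (A : Set (Fin d → ℕ)) : Prop :=
  (∀ a ∈ A, ∑ j, a j ≤ D ∧ e ∣ ∑ j, a j) ∧
  (0 : Fin d → ℕ) ∈ A ∧
  (∀ i j : Fin d, Pi.single i (D - 1) + Pi.single j 1 ∈ A) ∧
  (∀ i : Fin d, Pi.single i (D - e) ∈ A)


lemma aux_mono {M : Type*} [AddMonoid M] (A : Set M) (h0 : (0 : M) ∈ A) {m n : ℕ} (h : m ≤ n)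
    {y : M} (hy : y ∈ sumset A m) : y ∈ sumset A n := by
  induction h with
  | refl => exact hy
  | step _ ih => exact Set.mem_add.2 ⟨0, h0, y, ih, zero_add y⟩

lemma aux_choose {d : ℕ} (f : Fin d → ℕ) (s : ℕ) (hs : s ≤ ∑ i, f i) :
    ∃ q : Fin d → ℕ, (∀ i, q i ≤ f i) ∧ ∑ i, q i = s := by
  induction s with
  | zero => exact ⟨fun _ => 0, fun _ => Nat.zero_le _, by simp⟩
  | succ s ih =>
    obtain ⟨q, hq, hqs⟩ := ih (by omega)
    have : ∃ i, q i < f i := by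
      by_contra! h
      have := Finset.sum_le_sum (fun i (_ : i ∈ Finset.univ) => h i)
      omega
    obtain ⟨i, hi⟩ := this
    refine ⟨q + Pi.single i 1, fun j => ?_, ?_⟩
    · by_cases hj : j = i
      · subst hj; simp; omega
      · simp [hj, hq j]
    · simp [Finset.sum_add_distrib, hqs]

lemma aux_split_s10 {d : ℕ} (q : Fin d → ℕ) (i : Fin d) (k : ℕ) (h : k ≤ q i) :
    ∃ q' : Fin d → ℕ, q = Pi.single i k + q' ∧ ∑ j, q j = k + ∑ j, q' j := by
  have e : q = Pi.single i k + (q - Pi.single i k) := by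
    funext j
    by_cases hj : j = i
    · subst hj; simp; omega
    · simp [hj]
  refine ⟨_, e, ?_⟩
  conv_lhs => rw [e]
  simp only [Pi.add_apply, Finset.sum_add_distrib]
  simp

lemma aux_pos {d : ℕ} (q : Fin d → ℕ) {n : ℕ} (h : ∑ j, q j = n + 1) : ∃ i, 1 ≤ q i := by
  by_contra! h'
  have : ∑ j, q j = 0 := Finset.sum_eq_zero (fun i _ => by have := h' i; omega)
  omega

lemma aux_pairs {d D : ℕ} (A : Set (Fin d → ℕ))
    (hA : ∀ i j : Fin d, Pi.single i (D - 1) + Pi.single j 1 ∈ A) (s : ℕ) :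
    ∀ q r : Fin d → ℕ, ∑ i, q i = s → ∑ i, r i = s → (D - 1) • q + r ∈ sumset A s := by
  induction s with
  | zero =>
    intro q r hq hr
    have h1 : q = 0 := by
      funext i; simpa using (Finset.sum_eq_zero_iff.1 hq) i (Finset.mem_univ _)
    have h2 : r = 0 := by
      funext i; simpa using (Finset.sum_eq_zero_iff.1 hr) i (Finset.mem_univ _)
    subst h1 h2
    simp [sumset]
  | succ s ih =>
    intro q r hq hr
    obtain ⟨i, hi⟩ := aux_pos q hq
    obtain ⟨j, hj⟩ := aux_pos r hr
    obtain ⟨q', e1, s1⟩ := aux_split_s10 q i 1 hi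
    obtain ⟨r', e2, s2⟩ := aux_split_s10 r j 1 hj
    refine Set.mem_add.2 ⟨_, hA i j, _, ih q' r' (by omega) (by omega), ?_⟩
    rw [e1, e2, smul_add, ← Pi.single_smul]
    simp only [smul_eq_mul, mul_one]
    abel

lemma aux_base {d D : ℕ} (hd : 1 ≤ d) (hD : 3 ≤ D) (A : Set (Fin d → ℕ))
    (hA : ∀ i j : Fin d, Pi.single i (D - 1) + Pi.single j 1 ∈ A) (s : ℕ)
    (hs : (D - 2) * (d - 1) ≤ s) (y : Fin d → ℕ) (hy : ∑ j, y j = s * D) :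
    y ∈ sumset A s := by
  have key : s ≤ ∑ i, y i / (D - 1) := by
    have h1 : ∑ i, y i ≤ ∑ i, ((D - 1) * (y i / (D - 1)) + (D - 2)) := by
      apply Finset.sum_le_sum
      intro i _
      have := Nat.div_add_mod (y i) (D - 1)
      have := Nat.mod_lt (y i) (show D - 1 > 0 by omega)
      omega
    rw [Finset.sum_add_distrib, ← Finset.mul_sum, hy] at h1
    simp only [Finset.sum_const, Finset.card_univ, Fintype.card_fin, smul_eq_mul] at h1
    by_contra! h
    obtain ⟨k, rfl⟩ : ∃ k, D = k + 3 := ⟨D - 3, by omega⟩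
    obtain ⟨c, rfl⟩ : ∃ c, d = c + 1 := ⟨d - 1, by omega⟩
    simp only [show k + 3 - 1 = k + 2 by omega, show k + 3 - 2 = k + 1 by omega,
      show c + 1 - 1 = c by omega] at *
    nlinarith
  obtain ⟨q, hq, hqs⟩ := aux_choose _ s key
  have hle : ∀ i, (D - 1) * q i ≤ y i := fun i =>
    (Nat.mul_le_mul_left _ (hq i)).trans (Nat.mul_div_le _ _)
  have e : y = (D - 1) • q + (y - (D - 1) • q) := by
    funext i
    have := hle i
    simp only [Pi.add_apply, Pi.sub_apply, Pi.smul_apply, smul_eq_mul]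
    omega
  rw [e]
  apply aux_pairs A hA s _ _ hqs
  have h2 : ∑ i, y i = ∑ i, ((D - 1) • q + (y - (D - 1) • q)) i := by rw [← e]
  simp only [Pi.add_apply, Finset.sum_add_distrib] at h2
  have h3 : ∑ i, ((D - 1) • q) i = (D - 1) * s := by
    simp only [Pi.smul_apply, smul_eq_mul, ← Finset.mul_sum, hqs]
  rw [h3, hy] at h2
  obtain ⟨k, rfl⟩ : ∃ k, D = k + 1 := ⟨D - 1, by omega⟩
  simp only [Nat.add_sub_cancel] at h2 ⊢
  nlinarith

lemma aux_main {d D e : ℕ} (hd : 1 ≤ d) (hD : 3 ≤ D) (he : 1 ≤ e) (heD : e ≤ D)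
    (A : Set (Fin d → ℕ)) 
    (hA : ∀ i j : Fin d, Pi.single i (D - 1) + Pi.single j 1 ∈ A)
    (hA2 : ∀ i : Fin d, Pi.single i (D - e) ∈ A) (c : ℕ) : ∀ s : ℕ,
    (D - 2) * (d - 1) + c ≤ s → ∀ y : Fin d → ℕ, ∑ j, y j + c * e = s * D →
    y ∈ sumset A s := by
  induction c with
  | zero =>
    intro s hs y hy
    exact aux_base hd hD A hA s (by omega) y (by omega)
  | succ c ih =>
    intro s hs y hy
    obtain ⟨t, rfl⟩ : ∃ t, s = t + 1 := ⟨s - 1, by omega⟩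
    have : ∃ i, D - e ≤ y i := by
      by_contra! h
      have h1 : ∑ i, y i ≤ ∑ i : Fin d, (D - e - 1) :=
        Finset.sum_le_sum (fun i _ => by have := h i; omega)
      simp only [Finset.sum_const, Finset.card_univ, Fintype.card_fin, smul_eq_mul] at h1
      have hpos := h ⟨0, hd⟩
      obtain ⟨m, rfl⟩ : ∃ m, D = e + 1 + m := ⟨D - e - 1, by omega⟩
      obtain ⟨b, rfl⟩ : ∃ b, d = b + 1 := ⟨d - 1, by omega⟩
      obtain ⟨g, rfl⟩ : ∃ g, e = g + 1 := ⟨e - 1, by omega⟩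
      simp only [show g + 1 + 1 + m - (g + 1) - 1 = m by omega,
        show g + 1 + 1 + m - 2 = g + m by omega, show b + 1 - 1 = b by omega] at *
      have h2 : ((g + m) * b + (c + 1)) * (g + 1 + 1 + m) ≤ (t + 1) * (g + 1 + 1 + m) :=
        Nat.mul_le_mul_right _ hs
      have h3 : m * b ≤ (g + m) * b * (g + 1 + 1 + m) := by
        calc m * b ≤ (g + m) * b := Nat.mul_le_mul_right _ (by omega)
          _ ≤ _ := Nat.le_mul_of_pos_right _ (by omega)
      nlinarith [Nat.zero_le (c * m)]
    obtain ⟨i, hi⟩ := this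
    obtain ⟨y', e1, s1⟩ := aux_split_s10 y i _ hi
    refine Set.mem_add.2 ⟨_, hA2 i, y', ih t (by omega) y' ?_, e1.symm⟩
    have : (c + 1) * e = c * e + e := by ring
    have : (t + 1) * D = t * D + D := by ring
    omega

theorem stmt_10 (d D e : ℕ) (hd : 1 ≤ d) (hD : 3 ≤ D) (he : 1 ≤ e) (heD : e ≤ D)
    (hdvd : e ∣ D) (ht : 2 ≤ (D - 2) * (d - 1) + D / e)
    (A : Set (Fin d → ℕ)) (hA : OneSingType d D e A)
    (y : Fin d → ℕ) (hye : e ∣ ∑ j, y j)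
    (hy : ((D - 2) * (d - 1) + D / e - 2) * D < ∑ j, y j) :
    ∀ s : ℕ, ∑ j, y j ≤ s * D → y ∈ sumset A s := by
  obtain ⟨-, h0, h1, h2⟩ := hA
  have hex : ∃ s, ∑ j, y j ≤ s * D := ⟨∑ j, y j, Nat.le_mul_of_pos_right _ (by omega)⟩
  classical
  intro s hs
  have hn := Nat.find_spec hex
  have hmin := fun m => Nat.find_min hex (m := m)
  refine aux_mono A h0 (Nat.find_min' hex hs) ?_
  generalize Nat.find hex = n at hn hmin
  obtain ⟨c, hc⟩ : e ∣ n * D - ∑ j, y j := Nat.dvd_sub (hdvd.mul_left n) hye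
  have hlt : (D - 2) * (d - 1) + D / e - 2 < n :=
    lt_of_mul_lt_mul_right (hy.trans_le hn) (Nat.zero_le D)
  have hm := hmin (n - 1) (by omega)
  obtain ⟨m, rfl⟩ : ∃ m, n = m + 1 := ⟨n - 1, by omega⟩
  have e1 : (m + 1) * D = m * D + D := by ring
  simp only [Nat.add_sub_cancel] at hm
  have hce : e * c < D := by omega
  obtain ⟨k, rfl⟩ := hdvd
  have hck : c < k := lt_of_mul_lt_mul_left hce (Nat.zero_le e)
  rw [Nat.mul_div_cancel_left _ (by omega)] at hlt ht
  refine aux_main hd hD he heD A h1 h2 c (m + 1) (by omega) y ?_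
  rw [mul_comm c e]
  omega
end

section
/- Let d ≥ 1, D ≥ 2 and e be integers with 1 ≤ e ≤ D and e ∣ D, and let A ⊆ ℕ^d be a finite set such that 0 ∈ A, Dεᵢ ∈ A for all 1 ≤ i ≤ d, and |a| ≤ D for every a ∈ A. Then the following are equivalent: (i) e ∣ |a| for every a ∈ A, the vectors (D−1)εᵢ + ε_j belong to A for all 1 ≤ i, j ≤ d, the vectors (D−e)εᵢ belong to A for all 1 ≤ i ≤ d, and if e = 1 then there exists j ∈ {1, …, d} with ε_j ∉ A; (ii) there exist a finite set H ⊆ ℕ_e^d, with H nonempty if e = 1, and a number s₀ ∈ ℕ such that sA = Δ_{s,e} \ H for all s ≥ s₀. -/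
open Pointwise

section helpers
variable {d D e : ℕ} {A : Set (Fin d → ℕ)}

theorem ss_add {s t : ℕ} {x y : Fin d → ℕ} (hx : x ∈ sumset A s) (hy : y ∈ sumset A t) :
    x + y ∈ sumset A (s + t) := by
  induction s generalizing x with
  | zero =>
    have : x = 0 := hx
    subst this
    simpa using hy
  | succ s ih =>
    obtain ⟨a, ha, x', hx', rfl⟩ := Set.mem_add.1 hx
    rw [show s + 1 + t = (s + t) + 1 by ring, add_assoc a x' y]
    exact Set.add_mem_add ha (ih hx')

theorem ss_zero : (0 : Fin d → ℕ) ∈ sumset A 0 := rfl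

theorem ss_one {a : Fin d → ℕ} (ha : a ∈ A) : a ∈ sumset A 1 := by
  have := Set.add_mem_add ha (ss_zero (A := A))
  rwa [add_zero] at this

theorem ss_zero_all (h0 : (0 : Fin d → ℕ) ∈ A) (n : ℕ) : (0 : Fin d → ℕ) ∈ sumset A n := by
  induction n with
  | zero => rfl
  | succ n ih =>
    have := Set.add_mem_add h0 ih
    rwa [add_zero] at this

theorem ss_mono (h0 : (0 : Fin d → ℕ) ∈ A) {s t : ℕ} (h : s ≤ t) {x : Fin d → ℕ}
    (hx : x ∈ sumset A s) : x ∈ sumset A t := by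
  obtain ⟨k, rfl⟩ := Nat.exists_eq_add_of_le h
  simpa using ss_add hx (ss_zero_all h0 k)

theorem ss_nsmul {a : Fin d → ℕ} (ha : a ∈ A) (n : ℕ) : n • a ∈ sumset A n := by
  induction n with
  | zero => simpa using ss_zero
  | succ n ih =>
    rw [succ_nsmul]
    exact ss_add ih (ss_one ha)

theorem ss_sum {ι : Type} (S : Finset ι) (n : ι → ℕ) (a : ι → Fin d → ℕ) (ha : ∀ i, a i ∈ A) :
    ∑ i ∈ S, n i • a i ∈ sumset A (∑ i ∈ S, n i) := by
  classical
  induction S using Finset.induction_on with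
  | empty => simpa using ss_zero
  | insert i S hi ih =>
    rw [Finset.sum_insert hi, Finset.sum_insert hi]
    exact ss_add (ss_nsmul (ha i) _) ih

theorem ss_le (hle : ∀ a ∈ A, ∑ j, a j ≤ D) {s : ℕ} {x : Fin d → ℕ} (hx : x ∈ sumset A s) :
    ∑ j, x j ≤ s * D := by
  induction s generalizing x with
  | zero =>
    have : x = 0 := hx
    subst this
    simp
  | succ s ih =>
    obtain ⟨a, ha, x', hx', rfl⟩ := Set.mem_add.1 hx
    have h1 := ih hx'
    have h2 := hle a ha
    simp only [Pi.add_apply, Finset.sum_add_distrib]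
    nlinarith

theorem ss_dvd (hdv : ∀ a ∈ A, e ∣ ∑ j, a j) {s : ℕ} {x : Fin d → ℕ} (hx : x ∈ sumset A s) :
    e ∣ ∑ j, x j := by
  induction s generalizing x with
  | zero =>
    have : x = 0 := hx
    subst this
    simp
  | succ s ih =>
    obtain ⟨a, ha, x', hx', rfl⟩ := Set.mem_add.1 hx
    simp only [Pi.add_apply, Finset.sum_add_distrib]
    exact dvd_add (hdv a ha) (ih hx')

theorem ss_extA (hle : ∀ a ∈ A, ∑ j, a j ≤ D) (i j : Fin d) {s : ℕ} {x : Fin d → ℕ}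
    (hx : x ∈ sumset A s) (hs : ∑ k, x k = s * D) (hj : x j = 1)
    (hk : ∀ k, k ≠ i → k ≠ j → x k = 0) :
    ∃ a ∈ A, ∑ k, a k = D ∧ a j = 1 ∧ ∀ k, k ≠ i → k ≠ j → a k = 0 := by
  induction s generalizing x with
  | zero =>
    have : x = 0 := hx
    subst this
    simp at hj
  | succ s ih =>
    obtain ⟨a, ha, x', hx', rfl⟩ := Set.mem_add.1 hx
    have h1 := ss_le hle hx'
    have h2 := hle a ha
    simp only [Pi.add_apply, Finset.sum_add_distrib] at hs hj hk
    rw [Nat.succ_mul] at hs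
    have hk1 : ∀ k, k ≠ i → k ≠ j → a k = 0 := fun k a b => by have := hk k a b; omega
    have hk2 : ∀ k, k ≠ i → k ≠ j → x' k = 0 := fun k a b => by have := hk k a b; omega
    by_cases haj : a j = 1
    · exact ⟨a, ha, by omega, haj, hk1⟩
    · exact ih hx' (by omega) (by omega) hk2

theorem ss_extB (he : 1 ≤ e) (hdvd : e ∣ D) (hle : ∀ a ∈ A, ∑ j, a j ≤ D)
    (hdv : ∀ a ∈ A, e ∣ ∑ j, a j) (i : Fin d) {s : ℕ} {x : Fin d → ℕ}
    (hx : x ∈ sumset A s) (hs : ∑ k, x k + e = s * D)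
    (hk : ∀ k, k ≠ i → x k = 0) :
    ∃ a ∈ A, ∑ k, a k + e = D ∧ ∀ k, k ≠ i → a k = 0 := by
  induction s generalizing x with
  | zero => omega
  | succ s ih =>
    obtain ⟨a, ha, x', hx', rfl⟩ := Set.mem_add.1 hx
    have h1 := ss_le hle hx'
    have h2 := hle a ha
    simp only [Pi.add_apply, Finset.sum_add_distrib] at hs hk
    rw [Nat.succ_mul] at hs
    have hk1 : ∀ k, k ≠ i → a k = 0 := fun k a => by have := hk k a; omega
    have hk2 : ∀ k, k ≠ i → x' k = 0 := fun k a => by have := hk k a; omega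
    have h3 : e ∣ D - ∑ k, a k := Nat.dvd_sub hdvd (hdv a ha)
    by_cases haD : ∑ k, a k = D
    · exact ih hx' (by omega) hk2
    · have := Nat.le_of_dvd (by omega) h3
      exact ⟨a, ha, by omega, hk1⟩

theorem ss_big (hD : 2 ≤ D) (he : 1 ≤ e) (heD : e ≤ D) (hdvd : e ∣ D)
    (h0 : (0 : Fin d → ℕ) ∈ A)
    (hDeps : ∀ i : Fin d, Pi.single i D ∈ A)
    (h1 : ∀ i j : Fin d, Pi.single i (D - 1) + Pi.single j 1 ∈ A)
    (h2 : ∀ i : Fin d, Pi.single i (D - e) ∈ A)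
    (y : Fin d → ℕ) (hy : e ∣ ∑ j, y j) (i : Fin d) (hi : D * ((d + 1) * D) ≤ y i)
    (s : ℕ) (hs : ∑ j, y j ≤ s * D) : y ∈ sumset A s := by
  obtain ⟨δ, hδ⟩ := hdvd
  have hδ0 : 0 < δ := by
    rcases Nat.eq_zero_or_pos δ with h | h
    · subst h; omega
    · exact h
  set q : Fin d → ℕ := fun j => y j / D with hq
  set r : Fin d → ℕ := fun j => y j % D with hr
  have hqr : ∀ j, D * q j + r j = y j := fun j => Nat.div_add_mod _ _
  set R := ∑ j, r j with hR
  set Q := ∑ j, q j with hQ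
  have hsum : ∑ j, y j = D * Q + R := by
    rw [hQ, hR, Finset.mul_sum, ← Finset.sum_add_distrib]
    exact Finset.sum_congr rfl fun j _ => (hqr j).symm
  have hRle : R ≤ d * D := by
    have : R ≤ ∑ _j : Fin d, D := Finset.sum_le_sum fun j _ => (Nat.mod_lt _ (by omega)).le
    simpa using this
  have heR : e ∣ R := by
    rw [hsum] at hy
    exact (Nat.dvd_add_right (Dvd.dvd.mul_right ⟨δ, hδ⟩ _)).1 hy
  obtain ⟨ρ, hρ⟩ := heR
  obtain ⟨v, hv, κ, hκ⟩ : ∃ v < δ, δ ∣ ρ + v := by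
    have hm := Nat.mod_lt ρ hδ0
    by_cases h : ρ % δ = 0
    · exact ⟨0, hδ0, by simpa using Nat.dvd_of_mod_eq_zero h⟩
    · refine ⟨δ - ρ % δ, by omega, ρ / δ + 1, ?_⟩
      have := Nat.div_add_mod ρ δ
      rw [mul_add]; omega
  have hδD : δ ≤ D := by rw [hδ]; exact Nat.le_mul_of_pos_left _ he
  have hqi : (d + 1) * D ≤ q i := by
    rw [hq]
    exact (Nat.le_div_iff_mul_le (by omega)).2 (by rw [mul_comm]; exact hi)
  have hqi' : R + v ≤ q i := by nlinarith
  obtain ⟨w, hw⟩ : ∃ w, q i + κ = R + v + w := ⟨q i + κ - (R + v), by omega⟩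
  have hDq : D * q i = (D - 1) * R + v * (D - e) + w * D := by
    obtain ⟨D1, hD1⟩ : ∃ D1, D = D1 + 1 := ⟨D - 1, by omega⟩
    obtain ⟨E, hE⟩ : ∃ E, D = E + e := ⟨D - e, by omega⟩
    rw [show D - 1 = D1 by omega, show D - e = E by omega]
    have hk : R + e * v = D * κ := by rw [hρ, ← mul_add, hκ, hδ]; ring
    have hw2 : D * q i + D * κ = D * R + D * v + D * w := by rw [← mul_add, hw]; ring
    have e1 : D * R = D1 * R + R := by rw [hD1]; ring
    have e2 : D * v = v * E + e * v := by rw [hE]; ring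
    have e3 : D * w = w * D := mul_comm _ _
    omega
  set q' := Function.update q i w with hq'
  have hmem := ss_add (ss_add (ss_sum Finset.univ q' (fun j => Pi.single j D) hDeps)
    (ss_sum Finset.univ r (fun j => Pi.single i (D - 1) + Pi.single j 1) (h1 i)))
    (ss_nsmul (h2 i) v)
  have hQ' : ∑ j, q' j + q i = Q + w := by
    rw [hQ, hq', Finset.sum_update_of_mem (Finset.mem_univ i),
      ← Finset.add_sum_erase _ q (Finset.mem_univ i), Finset.sdiff_singleton_eq_erase]
    omega
  have hN : ∑ j, q' j + R + v = Q + κ := by omega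
  have hNs : Q + κ ≤ s := by
    have hk : R + e * v = D * κ := by rw [hρ, ← mul_add, hκ, hδ]; ring
    have : e * v < D := by rw [hδ]; exact Nat.mul_lt_mul_of_pos_left hv he
    have : D * (Q + κ) < D * (s + 1) := by rw [mul_add, mul_add, mul_comm D s]; omega
    have := Nat.lt_of_mul_lt_mul_left this
    omega
  rw [← hR, hN] at hmem
  have hyeq : y = ∑ j, q' j • (Pi.single j D : Fin d → ℕ)
      + ∑ j, r j • ((Pi.single i (D - 1) : Fin d → ℕ) + Pi.single j 1)
      + v • (Pi.single i (D - e) : Fin d → ℕ) := by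
    ext k
    simp only [Pi.add_apply, Finset.sum_apply, Pi.smul_apply, smul_eq_mul, Pi.single_apply,
      mul_add, Finset.sum_add_distrib, ← Finset.sum_mul, ← hR, mul_ite, mul_zero, mul_one,
      Finset.sum_ite_eq, Finset.mem_univ, if_true]
    have := hqr k
    by_cases hki : k = i
    · subst hki
      simp only [if_true, hq', Function.update_self]
      have := mul_comm R (D - 1)
      have : ∑ x, r x * (D - 1) = R * (D - 1) := by rw [hR, Finset.sum_mul]
      omega
    · simp only [hki, if_false, hq', Function.update_of_ne hki, ne_eq, not_false_eq_true]
      have := mul_comm (q k) D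
      simp
      omega
  rw [hyeq]
  exact ss_mono h0 hNs hmem

theorem ss_atom (j : Fin d) {s : ℕ}
    (hx : Pi.single j 1 ∈ sumset A s) : Pi.single j 1 ∈ A := by
  induction s with
  | zero =>
    have h : (Pi.single j 1 : Fin d → ℕ) = 0 := hx
    have := congrFun h j
    simp at this
  | succ s ih =>
    obtain ⟨a, ha, x', hx', h⟩ := Set.mem_add.1 hx
    have hj := congrFun h j
    simp at hj
    have hk : ∀ k, k ≠ j → a k = 0 ∧ x' k = 0 := fun k hk => by
      have := congrFun h k
      simp [hk] at this
      exact this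
    by_cases haj : a j = 1
    · convert ha using 1
      ext k
      by_cases hkj : k = j
      · subst hkj; simp [haj]
      · simp [hkj, (hk k hkj).1]
    · apply ih
      convert hx' using 1
      ext k
      by_cases hkj : k = j
      · subst hkj; simp; omega
      · simp [hkj, (hk k hkj).2]

theorem fin_small (M : ℕ) : {y : Fin d → ℕ | ∑ j, y j < M}.Finite := by
  refine (Set.finite_Icc (0 : Fin d → ℕ) (fun _ => M)).subset fun y hy => ⟨zero_le, fun k => ?_⟩
  have : y k ≤ ∑ j, y j := Finset.single_le_sum (fun _ _ => Nat.zero_le _) (Finset.mem_univ k)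
  have h : ∑ j, y j < M := hy
  show y k ≤ M
  omega

theorem bdd_of_fin {H : Set (Fin d → ℕ)} (hH : H.Finite) : ∃ M, ∀ y ∈ H, ∑ j, y j ≤ M := by
  obtain ⟨M, hM⟩ := (hH.image fun y => ∑ j, y j).bddAbove
  exact ⟨M, fun y hy => hM ⟨y, hy, rfl⟩⟩

end helpers

theorem stmt_14 (d D e : ℕ) (hd : 1 ≤ d) (hD : 2 ≤ D) (he : 1 ≤ e) (heD : e ≤ D)
    (hdvd : e ∣ D)
    (A : Set (Fin d → ℕ)) (hfin : A.Finite)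
    (h0 : (0 : Fin d → ℕ) ∈ A)
    (hDeps : ∀ i : Fin d, Pi.single i D ∈ A)
    (hle : ∀ a ∈ A, ∑ j, a j ≤ D) :
    ((∀ a ∈ A, e ∣ ∑ j, a j) ∧
      (∀ i j : Fin d, Pi.single i (D - 1) + Pi.single j 1 ∈ A) ∧
      (∀ i : Fin d, Pi.single i (D - e) ∈ A) ∧
      (e = 1 → ∃ j : Fin d, Pi.single j 1 ∉ A))
    ↔ (∃ H : Set (Fin d → ℕ), H.Finite ∧ H ⊆ NatE d e ∧ (e = 1 → H.Nonempty) ∧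
        ∃ s₀ : ℕ, ∀ s ≥ s₀, sumset A s = DeltaE d D e s \ H) := by
  constructor
  · rintro ⟨hdv, h1, h2, h3⟩
    set M := d * (D * ((d + 1) * D)) with hM
    have hbig : ∀ y : Fin d → ℕ, e ∣ ∑ j, y j → M ≤ ∑ j, y j → ∀ s, ∑ j, y j ≤ s * D →
        y ∈ sumset A s := by
      intro y hy hMy s hs
      have : ∃ i ∈ (Finset.univ : Finset (Fin d)), D * ((d + 1) * D) ≤ y i := by
        apply Finset.exists_le_of_sum_le ⟨⟨0, hd⟩, Finset.mem_univ _⟩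
        simpa [hM] using hMy
      obtain ⟨i, -, hi⟩ := this
      exact ss_big hD he heD hdvd h0 hDeps h1 h2 y hy i hi s hs
    have hf : ∀ y : Fin d → ℕ, ∃ n, (∃ s, y ∈ sumset A s) → y ∈ sumset A n := by
      intro y
      by_cases h : ∃ s, y ∈ sumset A s
      · obtain ⟨s, hs⟩ := h
        exact ⟨s, fun _ => hs⟩
      · exact ⟨0, fun h' => absurd h' h⟩
    choose f hf using hf
    obtain ⟨s₀, hs₀⟩ := ((fin_small (d := d) M).image f).bddAbove
    refine ⟨{y | e ∣ ∑ j, y j ∧ ∀ s, y ∉ sumset A s}, ?_, fun y hy => hy.1, ?_, s₀, ?_⟩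
    · refine (fin_small M).subset fun y hy => ?_
      by_contra hlt
      exact hy.2 (∑ j, y j) (hbig y hy.1 (not_lt.1 hlt) _ (Nat.le_mul_of_pos_right _ (by omega)))
    · intro he1
      obtain ⟨j, hj⟩ := h3 he1
      exact ⟨Pi.single j 1, by rw [he1]; exact one_dvd _,
        fun s hs => hj (ss_atom j hs)⟩
    · intro s hs
      ext y
      constructor
      · intro hy
        exact ⟨⟨ss_dvd hdv hy, ss_le hle hy⟩, fun h => h.2 s hy⟩
      · rintro ⟨⟨ha, hb⟩, hc⟩
        by_cases hlt : ∑ j, y j < M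
        · have hex : ∃ s, y ∈ sumset A s := by
            by_contra hn
            exact hc ⟨ha, fun s hs => hn ⟨s, hs⟩⟩
          have : f y ≤ s₀ := hs₀ ⟨y, hlt, rfl⟩
          exact ss_mono h0 (this.trans hs) (hf y hex)
        · exact hbig y ha (not_lt.1 hlt) s hb
  · rintro ⟨H, hHf, hHe, hH1, s₀, hs₀⟩
    obtain ⟨M, hM⟩ := bdd_of_fin hHf
    have hdv : ∀ a ∈ A, e ∣ ∑ j, a j := by
      intro a ha
      have := ss_mono h0 (Nat.le_add_left 1 s₀) (ss_one ha)
      rw [hs₀ _ (by omega)] at this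
      exact this.1.1
    set s := s₀ + M + 2 with hs
    have hsD : s₀ + M + 2 + D ≤ s * D := by rw [← hs]; nlinarith
    have hmem : ∀ y : Fin d → ℕ, e ∣ ∑ j, y j → M < ∑ j, y j → ∑ j, y j ≤ s * D →
        y ∈ sumset A s := by
      intro y ha hb hc
      rw [hs₀ s (by omega)]
      exact ⟨⟨ha, hc⟩, fun h => by have := hM y h; omega⟩
    refine ⟨hdv, ?_, ?_, ?_⟩
    · intro i j
      by_cases hij : i = j
      · subst hij
        rw [← Pi.single_add, Nat.sub_add_cancel (by omega)]
        exact hDeps i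
      · have hsum : ∑ k, ((Pi.single i (s * D - 1) + Pi.single j 1 : Fin d → ℕ)) k = s * D := by
          simp only [Pi.add_apply, Finset.sum_add_distrib, Finset.sum_pi_single', Finset.mem_univ,
            if_true]
          omega
        have hy := hmem (Pi.single i (s * D - 1) + Pi.single j 1)
          (by rw [hsum]; exact hdvd.mul_left _) (by rw [hsum]; omega) (by rw [hsum])
        obtain ⟨a, ha, hsa, haj, hak⟩ := ss_extA hle i j hy hsum
          (by simp [Ne.symm hij]) (fun k hki hkj => by simp [hki, hkj])
        convert ha using 1
        have hai : a i + 1 = D := by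
          rw [← hsa, ← haj]
          exact (Fintype.sum_eq_add i j hij fun k hk => hak k hk.1 hk.2).symm
        ext k
        by_cases hki : k = i
        · subst hki
          simp [hij]; omega
        · by_cases hkj : k = j
          · subst hkj; simp [hki, haj]
          · simp [hki, hkj, hak k hki hkj]
    · intro i
      have hsum : ∑ k, (Pi.single i (s * D - e) : Fin d → ℕ) k = s * D - e := by
        simp
      have hy := hmem (Pi.single i (s * D - e))
          (by rw [hsum]; exact Nat.dvd_sub (hdvd.mul_left _) dvd_rfl)
          (by rw [hsum]; omega) (by rw [hsum]; omega)
      obtain ⟨a, ha, hsa, hak⟩ := ss_extB he hdvd hle hdv i hy (by rw [hsum]; omega)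
          (fun k hki => by simp [hki])
      convert ha using 1
      have hai : ∑ k, a k = a i := Fintype.sum_eq_single i hak
      ext k
      by_cases hki : k = i
      · subst hki
        simp; omega
      · simp [hki, hak k hki]
    · intro he1
      obtain ⟨h, hh⟩ := hH1 he1
      by_contra! hall
      have hm := ss_sum Finset.univ h (fun j => Pi.single j 1) hall
      have heq : ∑ j, h j • (Pi.single j 1 : Fin d → ℕ) = h := by
        ext k
        simp [Finset.sum_apply, Pi.single_apply]
      rw [heq] at hm
      have := ss_mono h0 (Nat.le_add_left _ s₀) hm
      rw [hs₀ _ (by omega)] at this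
      exact this.2 hh
end
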